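/- Let μ_t, μ_c, λ be real numbers with 0 < λ < μ_t and λ < μ_c. Let I_t = ∫₀^∞ ∫₀^∞ x·t·(μ_t−λ)·exp(−(μ_t−λ)(t+x))·λ·exp(−λx) dt dx, and let I_c = ∫₀^∞ ∫₀^∞ ∫₀^∞ x·t·(μ_c−λ)·exp(−(μ_c−λ)(t+y))·g(x,y)·λ·exp(−λx) dt dy dx, where g(x,y) = μ_t·exp(−μ_t y)·exp(−(μ_t−λ)x) + (μ_t(μ_t−λ)/(2μ_t−λ))·h(x,y) with h(x,y) = exp(−(μ_t−λ)x)·(exp((μ_t−λ)y) − exp(−μ_t y)) if y ≤ x and h(x,y) = (exp(μ_t x) − exp(−(μ_t−λ)x))·exp(−μ_t y) if y > x. Then λ·(I_t + I_c) + 1/μ_t + 1/μ_c + 1/λ = λ²/(μ_t²(μ_t−λ)) + 1/μ_t + λ²/(μ_c²(μ_c−λ)) + 1/μ_c + λ²/(μ_t μ_c (μ_t + μ_c − λ)) + 1/λ. -/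

import Mathlib

open MeasureTheory Real Set

/-!
Given that a task is generated a time `x` after its predecessor, the two reach the computation
queue a time `Y = max (x - T) 0 + S` apart, where the sojourn time `T` of the predecessor in the
transmission queue is exponential of rate `μt - λ` and the service time `S` is exponential of rate
`μt`; the function `g x` is the density of `Y`. The computation wait is the excess over `Y` of the
predecessor's sojourn time in the computation queue, which is exponential of rate `μc - λ`; hence
only the Laplace transform of `g x` at `μc - λ` enters `Ic`. It is the transform of `S` times that
of `max (x - T) 0`, and, after multiplication by `exp (-λ x)`, the latter consists of an exponential
and of a convolution of two exponentials, whose first moments are explicit. Working with the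
convolution rather than its closed form avoids dividing by `μt - μc`.
-/

section Convolution

open scoped Convolution

variable {f g : ℝ → ℝ}

lemma ae_mul_convolution_eq_add (hf : Integrable f) (hf₁ : Integrable fun x => x * f x)
    (hg : Integrable g) (hg₁ : Integrable fun x => x * g x) :
    ∀ᵐ x, x * (f ⋆[.mul ℝ ℝ] g) x
      = ((fun y => y * f y) ⋆[.mul ℝ ℝ] g) x + (f ⋆[.mul ℝ ℝ] fun y => y * g y) x := by
  filter_upwards [hf₁.ae_convolution_exists (.mul ℝ ℝ) hg,
    hf.ae_convolution_exists (.mul ℝ ℝ) hg₁] with x hfg hfg'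
  simp only [convolution_def, ← integral_const_mul]
  rw [← integral_add hfg hfg']
  congr! 2
  simp only [ContinuousLinearMap.mul_apply']
  ring

lemma integral_mul_convolution (hf : Integrable f) (hf₁ : Integrable fun x => x * f x)
    (hg : Integrable g) (hg₁ : Integrable fun x => x * g x) :
    ∫ x, x * (f ⋆[.mul ℝ ℝ] g) x
      = (∫ x, x * f x) * (∫ x, g x) + (∫ x, f x) * ∫ x, x * g x := by
  rw [integral_congr_ae (ae_mul_convolution_eq_add hf hf₁ hg hg₁),
    integral_add (hf₁.integrable_convolution _ hg) (hf.integrable_convolution _ hg₁),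
    integral_convolution _ hf₁ hg, integral_convolution _ hf hg₁]
  simp only [ContinuousLinearMap.mul_apply']

lemma integral_Ioi_mul_convolution
    (hf : IntegrableOn f (Ioi 0)) (hf₁ : IntegrableOn (fun x => x * f x) (Ioi 0))
    (hg : IntegrableOn g (Ioi 0)) (hg₁ : IntegrableOn (fun x => x * g x) (Ioi 0)) :
    ∫ x in Ioi 0, x * ∫ y in 0..x, f y * g (x - y)
      = (∫ x in Ioi 0, x * f x) * (∫ x in Ioi 0, g x)
        + (∫ x in Ioi 0, f x) * ∫ x in Ioi 0, x * g x := by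
  have indicator_id_mul (φ : ℝ → ℝ) :
      (Ioi 0).indicator (fun x => x * φ x) = fun x => x * (Ioi 0).indicator φ x :=
    funext fun x => indicator_mul_right (Ioi 0) (fun x => x) φ
  rw [← integrable_indicator_iff measurableSet_Ioi] at hf hf₁ hg hg₁
  rw [indicator_id_mul] at hf₁ hg₁
  simp only [← integral_indicator measurableSet_Ioi, indicator_id_mul]
  rw [← integral_mul_convolution hf hf₁ hg hg₁,
    ← posConvolution_eq_convolution_indicator f g (.mul ℝ ℝ) volume]
  rfl

end Convolution

section Exponential

variable {r : ℝ}

lemma integral_pow_mul_exp_neg_mul_Ioi (n : ℕ) (hr : 0 < r) :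
    ∫ x in Ioi 0, x ^ n * exp (-(r * x)) = n.factorial / r ^ (n + 1) := by
  have h := integral_rpow_mul_exp_neg_mul_Ioi (a := n + 1) (by positivity) hr
  rw [Gamma_nat_eq_factorial, ← Nat.cast_succ, rpow_natCast] at h
  simpa [div_eq_inv_mul] using h

lemma integral_exp_neg_mul_Ioi_zero (hr : 0 < r) : ∫ x in Ioi 0, exp (-(r * x)) = 1 / r := by
  simpa using integral_pow_mul_exp_neg_mul_Ioi 0 hr

lemma integral_mul_exp_neg_mul_Ioi (hr : 0 < r) :
    ∫ x in Ioi 0, x * exp (-(r * x)) = 1 / r ^ 2 := by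
  simpa using integral_pow_mul_exp_neg_mul_Ioi 1 hr

lemma integrableOn_exp_neg_mul_Ioi (hr : 0 < r) :
    IntegrableOn (fun x => exp (-(r * x))) (Ioi 0) :=
  .of_integral_ne_zero <| by rw [integral_exp_neg_mul_Ioi_zero hr]; positivity

lemma integrableOn_mul_exp_neg_mul_Ioi (hr : 0 < r) :
    IntegrableOn (fun x => x * exp (-(r * x))) (Ioi 0) :=
  .of_integral_ne_zero <| by rw [integral_mul_exp_neg_mul_Ioi hr]; positivity

lemma integral_mul_mul_exp_neg_mul_add (hr : 0 < r) (y : ℝ) :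
    ∫ t in Ioi 0, t * (r * exp (-(r * (t + y)))) = exp (-(r * y)) / r := by
  have (t : ℝ) : t * (r * exp (-(r * (t + y)))) = r * exp (-(r * y)) * (t * exp (-(r * t))) := by
    rw [mul_add, neg_add, exp_add]
    ring
  simp only [this]
  rw [integral_const_mul, integral_mul_exp_neg_mul_Ioi hr]
  field_simp

lemma integral_mul_convolution_exp {p q : ℝ} (hp : 0 < p) (hq : 0 < q) :
    ∫ x in Ioi 0, x * ∫ y in 0..x, exp (-(p * y)) * exp (-(q * (x - y)))
      = 1 / (p ^ 2 * q) + 1 / (p * q ^ 2) := by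
  rw [integral_Ioi_mul_convolution (f := fun y => exp (-(p * y)))
      (g := fun y => exp (-(q * y))) (integrableOn_exp_neg_mul_Ioi hp)
      (integrableOn_mul_exp_neg_mul_Ioi hp) (integrableOn_exp_neg_mul_Ioi hq)
      (integrableOn_mul_exp_neg_mul_Ioi hq),
    integral_mul_exp_neg_mul_Ioi hp, integral_mul_exp_neg_mul_Ioi hq,
    integral_exp_neg_mul_Ioi_zero hp, integral_exp_neg_mul_Ioi_zero hq]
  field_simp

lemma integrableOn_mul_convolution_exp {p q : ℝ} (hp : 0 < p) (hq : 0 < q) :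
    IntegrableOn (fun x => x * ∫ y in 0..x, exp (-(p * y)) * exp (-(q * (x - y)))) (Ioi 0) :=
  .of_integral_ne_zero <| by rw [integral_mul_convolution_exp hp hq]; positivity

lemma integral_mul_exp_neg_mul_of_hasDerivAt {F F' : ℝ → ℝ} {s a b : ℝ} (hs : s ≠ 0)
    (hF : ∀ u ∈ uIcc a b, HasDerivAt F (F' u) u) (hF' : IntervalIntegrable F' volume a b) :
    ∫ u in a..b, F u * exp (-(s * u))
      = (F a * exp (-(s * a)) - F b * exp (-(s * b))
        + ∫ u in a..b, F' u * exp (-(s * u))) / s := by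
  have hexp : Continuous fun u => exp (-(s * u)) := by fun_prop
  have hprimitive : ∀ u ∈ uIcc a b,
      HasDerivAt (fun u => -exp (-(s * u)) / s) (exp (-(s * u))) u := by
    intro u _
    convert! ((hasDerivAt_id u).const_mul s).neg.exp.neg.div_const s using 1
    simp [hs]
  rw [intervalIntegral.integral_mul_deriv_eq_deriv_mul hF hprimitive hF'
    (hexp.intervalIntegrable a b)]
  simp only [neg_div, mul_neg, ← mul_div_assoc, intervalIntegral.integral_neg,
    intervalIntegral.integral_div]
  ring

lemma integral_exp_neg_mul_comp_min {F F' : ℝ → ℝ} {s x : ℝ} (hs : 0 < s) (hx : 0 ≤ x)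
    (hF : ∀ u ∈ Icc 0 x, HasDerivAt F (F' u) u) (hF' : IntervalIntegrable F' volume 0 x) :
    ∫ y in Ioi 0, exp (-(s * y)) * F (min x y)
      = (F 0 + ∫ u in 0..x, F' u * exp (-(s * u))) / s := by
  rw [← uIcc_of_le hx] at hF
  have below : ∀ y ∈ uIcc 0 x, exp (-(s * y)) * F (min x y) = F y * exp (-(s * y)) :=
    fun y hy => by rw [min_eq_right (uIcc_of_le hx ▸ hy).2, mul_comm]
  have above : ∀ y ∈ Ioi x, exp (-(s * y)) * F (min x y) = F x * exp (-s * y) :=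
    fun y hy => by rw [min_eq_left (le_of_lt hy), neg_mul, mul_comm]
  have hcont : ContinuousOn (fun y => F y * exp (-(s * y))) (uIcc 0 x) :=
    .mul (fun u hu => (hF u hu).continuousAt.continuousWithinAt) (by fun_prop)
  rw [← intervalIntegral.integral_interval_add_Ioi' (b := x),
    intervalIntegral.integral_congr below, setIntegral_congr_fun measurableSet_Ioi above,
    integral_mul_exp_neg_mul_of_hasDerivAt hs.ne' hF hF', integral_const_mul,
    integral_exp_mul_Ioi (neg_lt_zero.mpr hs), neg_div_neg_eq, neg_mul, mul_zero, neg_zero,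
    exp_zero]
  · ring
  · exact (hcont.congr below).intervalIntegrable
  · rw [integrableOn_congr_fun above measurableSet_Ioi]
    exact (integrableOn_exp_mul_Ioi (neg_lt_zero.mpr hs) x).const_mul (F x)

end Exponential

/-- Density at `y` of `max (x - T) 0 + S` for independent exponential `T` and `S` of rates `a` and
`m`. The first summand comes from the event `x ≤ T`; the integration variable of the second one is
the value of `x - T`. In the tandem queue, `T` is the sojourn time of a task in the transmission
queue, `S` the transmission service time of the next task, and `x` the time between the generations
of the two; the density is then that of the time between their arrivals at the computation queue. -/
noncomputable def departureGapDensity (a m x y : ℝ) : ℝ :=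
  m * exp (-(m * y)) * exp (-(a * x))
    + ∫ u in 0..min x y, a * exp (-(a * (x - u))) * (m * exp (-(m * (y - u))))

section DepartureGap

variable {a m : ℝ}

lemma departureGapDensity_eq_exp_mul (x y : ℝ) :
    departureGapDensity a m x y = m * exp (-(a * x)) * (exp (-(m * y))
      * (1 + ∫ u in 0..min x y, a * exp ((a + m) * u))) := by
  have (u : ℝ) : a * exp (-(a * (x - u))) * (m * exp (-(m * (y - u))))
      = m * exp (-(a * x)) * exp (-(m * y)) * (a * exp ((a + m) * u)) := by
    rw [show -(a * (x - u)) = -(a * x) + a * u by ring,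
      show -(m * (y - u)) = -(m * y) + m * u by ring, add_mul, exp_add, exp_add, exp_add]
    ring
  simp only [departureGapDensity, this]
  rw [intervalIntegral.integral_const_mul]
  ring

lemma departureGapDensity_eq_ite (h : a + m ≠ 0) (x y : ℝ) :
    departureGapDensity a m x y = m * exp (-(m * y)) * exp (-(a * x)) + m * a / (a + m) *
      (if y ≤ x then exp (-(a * x)) * (exp (a * y) - exp (-(m * y)))
        else (exp (m * x) - exp (-(a * x))) * exp (-(m * y))) := by
  rw [departureGapDensity_eq_exp_mul, intervalIntegral.integral_const_mul,
    intervalIntegral.integral_comp_mul_left exp h, integral_exp, mul_zero, exp_zero, smul_eq_mul]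
  split_ifs with hyx
  · rw [min_eq_right hyx, show a * y = (a + m) * y + -(m * y) by ring, exp_add]
    field_simp
  · rw [min_eq_left (not_le.mp hyx).le, show m * x = (a + m) * x + -(a * x) by ring, exp_add]
    field_simp

lemma integral_exp_neg_mul_departureGapDensity {b x : ℝ} (hs : 0 < m + b) (hx : 0 ≤ x) :
    ∫ y in Ioi 0, exp (-(b * y)) * departureGapDensity a m x y
      = m / (m + b)
        * (exp (-(a * x)) + a * ∫ u in 0..x, exp (-(b * u)) * exp (-(a * (x - u)))) := by
  set F : ℝ → ℝ := fun v => 1 + ∫ u in 0..v, a * exp ((a + m) * u)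
  have hF' : Continuous fun u => a * exp ((a + m) * u) := by fun_prop
  have hF (u : ℝ) : HasDerivAt F (a * exp ((a + m) * u)) u :=
    (hF'.integral_hasStrictDerivAt 0 u).hasDerivAt.const_add 1
  calc ∫ y in Ioi 0, exp (-(b * y)) * departureGapDensity a m x y
      = m * exp (-(a * x)) * ∫ y in Ioi 0, exp (-((m + b) * y)) * F (min x y) := by
        rw [← integral_const_mul]
        congr! 2
        rw [departureGapDensity_eq_exp_mul, add_mul, neg_add, exp_add]
        ring
    _ = m / (m + b) * (exp (-(a * x))
        + ∫ u in 0..x, exp (-(a * x)) * (a * exp ((a + m) * u) * exp (-((m + b) * u)))) := by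
        rw [integral_exp_neg_mul_comp_min hs hx (fun u _ => hF u)
          (hF'.intervalIntegrable 0 x), intervalIntegral.integral_const_mul]
        simp only [F, intervalIntegral.integral_same]
        ring
    _ = m / (m + b)
        * (exp (-(a * x)) + a * ∫ u in 0..x, exp (-(b * u)) * exp (-(a * (x - u)))) := by
        rw [← intervalIntegral.integral_const_mul]
        congr! 4
        simp only [← exp_add, mul_left_comm _ a, mul_assoc]
        ring_nf

end DepartureGap

section Waiting

variable {m c l : ℝ}

lemma integral_interarrival_mul_transmissionWait (hm : 0 < m) (ht : l < m) :
    ∫ x in Ioi 0, ∫ t in Ioi 0,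
        x * t * ((m - l) * exp (-((m - l) * (t + x)))) * (l * exp (-(l * x)))
      = l / (m ^ 2 * (m - l)) := by
  calc _ = ∫ x in Ioi 0, l / (m - l) * (x * exp (-(m * x))) := by
        congr! 2 with x
        simp only [mul_assoc x, integral_const_mul, integral_mul_const,
          integral_mul_mul_exp_neg_mul_add (sub_pos.mpr ht)]
        rw [show -(m * x) = -((m - l) * x) + -(l * x) by ring, exp_add]
        ring
    _ = l / (m ^ 2 * (m - l)) := by
        rw [integral_const_mul, integral_mul_exp_neg_mul_Ioi hm]
        field_simp

lemma exp_neg_mul_mul_integral_exp_mul_exp (a b l x : ℝ) :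
    exp (-(l * x)) * ∫ u in 0..x, exp (-(b * u)) * exp (-(a * (x - u)))
      = ∫ u in 0..x, exp (-((b + l) * u)) * exp (-((a + l) * (x - u))) := by
  rw [← intervalIntegral.integral_const_mul]
  congr! 2
  simp only [← exp_add]
  ring_nf

lemma integral_interarrival_mul_computationWait_of_interarrival_eq {x : ℝ} (hx : 0 ≤ x)
    (hlc : l < c) (hs : 0 < m + c - l) :
    ∫ y in Ioi 0, ∫ t in Ioi 0,
        x * t * ((c - l) * exp (-((c - l) * (t + y)))) * departureGapDensity (m - l) m x y
          * (l * exp (-(l * x)))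
      = l / (c - l) * (m / (m + c - l)) * (x * exp (-(m * x))
        + (m - l) * (x * ∫ u in 0..x, exp (-(c * u)) * exp (-(m * (x - u))))) := by
  have hs' : 0 < m + (c - l) := by rwa [← add_sub_assoc]
  have integral_wait (y : ℝ) : ∫ t in Ioi 0,
      x * t * ((c - l) * exp (-((c - l) * (t + y)))) * departureGapDensity (m - l) m x y
        * (l * exp (-(l * x)))
      = x * (l * exp (-(l * x))) / (c - l)
        * (exp (-((c - l) * y)) * departureGapDensity (m - l) m x y) := by
    simp only [mul_assoc x, integral_const_mul, integral_mul_const,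
      integral_mul_mul_exp_neg_mul_add (sub_pos.mpr hlc)]
    ring
  have exp_mul_integral := exp_neg_mul_mul_integral_exp_mul_exp (m - l) (c - l) l x
  simp only [sub_add_cancel] at exp_mul_integral
  simp only [integral_wait]
  rw [integral_const_mul, integral_exp_neg_mul_departureGapDensity hs' hx, ← exp_mul_integral,
    show -(m * x) = -(l * x) + -((m - l) * x) by ring, exp_add]
  ring

lemma integral_interarrival_mul_computationWait (hm : 0 < m) (hc : 0 < c) (hlc : l < c) :
    ∫ x in Ioi 0, ∫ y in Ioi 0, ∫ t in Ioi 0,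
        x * t * ((c - l) * exp (-((c - l) * (t + y)))) * departureGapDensity (m - l) m x y
          * (l * exp (-(l * x)))
      = l / (c ^ 2 * (c - l)) + l / (m * c * (m + c - l)) := by
  have hs : 0 < m + c - l := by linarith
  have hcl : c - l ≠ 0 := by linarith
  rw [setIntegral_congr_fun measurableSet_Ioi fun x hx =>
      integral_interarrival_mul_computationWait_of_interarrival_eq (le_of_lt hx) hlc hs,
    integral_const_mul, integral_add (integrableOn_mul_exp_neg_mul_Ioi hm)
      ((integrableOn_mul_convolution_exp hc hm).const_mul _),
    integral_const_mul, integral_mul_exp_neg_mul_Ioi hm, integral_mul_convolution_exp hc hm]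
  field_simp
  ring

end Waiting

/-- Proposition 1: closed form of the timeliness of information in the
M/M/1–M/M/1 tandem (equation (3)). -/
theorem stmt_3 (μt μc lam : ℝ) (hlam : 0 < lam) (ht : lam < μt) (hc : lam < μc)
    (g : ℝ → ℝ → ℝ)
    (hg : ∀ x y : ℝ, 0 < x → 0 < y →
      g x y = μt * exp (-(μt * y)) * exp (-((μt - lam) * x))
        + μt * (μt - lam) / (2 * μt - lam) *
          (if y ≤ x then exp (-((μt - lam) * x)) * (exp ((μt - lam) * y) - exp (-(μt * y)))
           else (exp (μt * x) - exp (-((μt - lam) * x))) * exp (-(μt * y))))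
    (It Ic : ℝ)
    (hIt : It = ∫ x in Ioi (0:ℝ), ∫ t in Ioi (0:ℝ),
        x * t * ((μt - lam) * exp (-((μt - lam) * (t + x)))) * (lam * exp (-(lam * x))))
    (hIc : Ic = ∫ x in Ioi (0:ℝ), ∫ y in Ioi (0:ℝ), ∫ t in Ioi (0:ℝ),
        x * t * ((μc - lam) * exp (-((μc - lam) * (t + y)))) * g x y * (lam * exp (-(lam * x)))) :
    lam * (It + Ic) + 1 / μt + 1 / μc + 1 / lam
      = lam ^ 2 / (μt ^ 2 * (μt - lam)) + 1 / μt + lam ^ 2 / (μc ^ 2 * (μc - lam)) + 1 / μc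
        + lam ^ 2 / (μt * μc * (μt + μc - lam)) + 1 / lam := by
  have hμt : 0 < μt := hlam.trans ht
  have hμc : 0 < μc := hlam.trans hc
  have hg_density : ∀ x ∈ Ioi (0 : ℝ), ∀ y ∈ Ioi (0 : ℝ),
      g x y = departureGapDensity (μt - lam) μt x y := by
    intro x hx y hy
    rw [hg x y hx hy, departureGapDensity_eq_ite (by linarith),
      show μt - lam + μt = 2 * μt - lam by ring]
  have hIc_density : Ic = ∫ x in Ioi (0:ℝ), ∫ y in Ioi (0:ℝ), ∫ t in Ioi (0:ℝ),
      x * t * ((μc - lam) * exp (-((μc - lam) * (t + y))))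
        * departureGapDensity (μt - lam) μt x y * (lam * exp (-(lam * x))) := by
    rw [hIc]
    refine setIntegral_congr_fun measurableSet_Ioi fun x hx =>
      setIntegral_congr_fun measurableSet_Ioi fun y hy => ?_
    simp only [hg_density x hx y hy]
  rw [hIc_density, integral_interarrival_mul_computationWait hμt hμc hc, hIt,
    integral_interarrival_mul_transmissionWait hμt ht]
  ring
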